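/- First fundamental theorem of FC for the general fractional derivative of Riemann–Liouville type: let (κ, k) ∈ L₁ and f ∈ C_{-1}(0,∞). Then for every t > 0 the function s ↦ (k * (κ * f))(s) is differentiable at t and its derivative equals f(t); that is, (D_{(k)} I_{(κ)} f)(t) = f(t) for all t > 0, so D_{(k)} is a left inverse operator to I_{(κ)} on C_{-1}(0,∞). -/

import Mathlib

/-!
Associativity and commutativity of the Laplace convolution and the Sonin condition give
`k * (κ * f) = (κ * k) * f = 1 * f`, the primitive of `f`, whose derivative is `f` wherever `f` is
continuous. Associativity is needed at every point, whereas the `L¹` theory of convolution gives it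
only almost everywhere. In `f (t - τ) * g τ`, however, one of the two arguments is always at least
`t / 2`: if `f` and `g` are integrable near `0` and locally bounded on `(0, ∞)`, then their
convolution exists at every `t > 0` and again has these two properties.
-/

open Real Filter MeasureTheory intervalIntegral

/-- The Laplace convolution `(f * g)(t) = ∫_0^t f(t-τ) g(τ) dτ`. -/
noncomputable def lconv (f g : ℝ → ℝ) : ℝ → ℝ :=
  fun t => ∫ τ in (0:ℝ)..t, f (t - τ) * g τ

/-- The space `C_{-1}(0,∞)`: functions representable as `t^p f₁(t)` with `p > -1`
and `f₁` continuous on `[0,∞)`. -/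
def CMinusOne (f : ℝ → ℝ) : Prop :=
  ∃ p : ℝ, p > -1 ∧ ∃ f₁ : ℝ → ℝ, ContinuousOn f₁ (Set.Ici 0) ∧
    ∀ t > (0:ℝ), f t = t ^ p * f₁ t


/-- The class `L₁` of Sonin kernel pairs: `κ, k ∈ C_{-1}(0,∞)` with `(κ * k)(t) = 1`
for all `t > 0`. -/
def SoninPair (κ k : ℝ → ℝ) : Prop :=
  CMinusOne κ ∧ CMinusOne k ∧ ∀ t > (0:ℝ), lconv κ k t = 1


open Set Function Topology ContinuousLinearMap
open scoped Convolution

section Convolution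

variable {E E' E'' F F' F'' : Type*}
  [NormedAddCommGroup E] [NormedAddCommGroup E'] [NormedAddCommGroup E'']
  [NormedAddCommGroup F] [NormedAddCommGroup F'] [NormedAddCommGroup F'']

/-- The class of functions on `ℝ` that are integrable and bounded on every ray `[a, ∞)` with
`a > 0`. It allows an integrable singularity at `0` and is stable under convolution. -/
structure IntegrableBddRays (u : ℝ → E) : Prop where
  integrable : Integrable u
  bounded : ∀ a > 0, ∃ C, ∀ t ≥ a, ‖u t‖ ≤ C

namespace IntegrableBddRays

variable {u : ℝ → E} {v : ℝ → E'} {w : ℝ → E''}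

lemma norm (hu : IntegrableBddRays u) : IntegrableBddRays (fun t ↦ ‖u t‖) where
  integrable := hu.integrable.norm
  bounded := by simpa only [norm_norm] using hu.bounded

variable [NormedSpace ℝ E] [NormedSpace ℝ E'] [NormedSpace ℝ E'']
  [NormedSpace ℝ F] [NormedSpace ℝ F'] [NormedSpace ℝ F'']

lemma exists_norm_bilin_le (L : E →L[ℝ] E' →L[ℝ] F) (hu : IntegrableBddRays u)
    (hv : IntegrableBddRays v) {a : ℝ} (ha : 0 < a) :
    ∃ C D, ∀ x ≥ a, ∀ t, ‖L (u t) (v (x - t))‖ ≤ C * ‖u t‖ + D * ‖v (x - t)‖ := by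
  obtain ⟨C, hC⟩ := hv.bounded (a / 2) (half_pos ha)
  obtain ⟨D, hD⟩ := hu.bounded (a / 2) (half_pos ha)
  have hC₀ : 0 ≤ C := (norm_nonneg _).trans (hC _ le_rfl)
  have hD₀ : 0 ≤ D := (norm_nonneg _).trans (hD _ le_rfl)
  refine ⟨‖L‖ * C, ‖L‖ * D, fun x hx t ↦ ?_⟩
  calc ‖L (u t) (v (x - t))‖ ≤ ‖L‖ * (‖u t‖ * ‖v (x - t)‖) := by
        simpa only [mul_assoc] using L.le_opNorm₂ (u t) (v (x - t))
    _ ≤ ‖L‖ * (C * ‖u t‖ + D * ‖v (x - t)‖) := by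
        gcongr
        rcases le_total (a / 2) t with ht | ht
        · have := mul_le_mul_of_nonneg_right (hD t ht) (norm_nonneg (v (x - t)))
          linarith [mul_nonneg hC₀ (norm_nonneg (u t))]
        · have := mul_le_mul_of_nonneg_left (hC (x - t) (by linarith)) (norm_nonneg (u t))
          linarith [mul_nonneg hD₀ (norm_nonneg (v (x - t)))]
    _ = ‖L‖ * C * ‖u t‖ + ‖L‖ * D * ‖v (x - t)‖ := by ring

lemma convolutionExistsAt (L : E →L[ℝ] E' →L[ℝ] F) (hu : IntegrableBddRays u)
    (hv : IntegrableBddRays v) {x : ℝ} (hx : 0 < x) : ConvolutionExistsAt u v x L := by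
  obtain ⟨C, D, hCD⟩ := exists_norm_bilin_le L hu hv hx
  have hbound : Integrable fun t ↦ C * ‖u t‖ + D * ‖v (x - t)‖ :=
    (hu.integrable.norm.const_mul C).add ((hv.integrable.comp_sub_left x).norm.const_mul D)
  exact hbound.mono'
    (hu.integrable.aestronglyMeasurable.convolution_integrand_snd L
      hv.integrable.aestronglyMeasurable x)
    (.of_forall (hCD x le_rfl))

lemma convolution (L : E →L[ℝ] E' →L[ℝ] F) (hu : IntegrableBddRays u)
    (hv : IntegrableBddRays v) : IntegrableBddRays (u ⋆[L] v) where
  integrable := hu.integrable.integrable_convolution L hv.integrable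
  bounded a ha := by
    obtain ⟨C, D, hCD⟩ := exists_norm_bilin_le L hu hv ha
    refine ⟨C * (∫ t, ‖u t‖) + D * ∫ t, ‖v t‖, fun x hx ↦ ?_⟩
    have hu' : Integrable fun t ↦ C * ‖u t‖ := hu.integrable.norm.const_mul C
    have hv' : Integrable fun t ↦ D * ‖v (x - t)‖ :=
      (hv.integrable.comp_sub_left x).norm.const_mul D
    calc ‖(u ⋆[L] v) x‖ ≤ ∫ t, (C * ‖u t‖ + D * ‖v (x - t)‖) :=
          MeasureTheory.norm_integral_le_of_norm_le (hu'.add hv') (.of_forall (hCD x hx))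
      _ = C * (∫ t, ‖u t‖) + D * ∫ t, ‖v t‖ := by
          rw [MeasureTheory.integral_add hu' hv', MeasureTheory.integral_const_mul,
            MeasureTheory.integral_const_mul,
            integral_sub_left_eq_self (fun t ↦ ‖v t‖) volume x]

lemma convolution_assoc [CompleteSpace F] [CompleteSpace F'] [CompleteSpace F'']
    (L : E →L[ℝ] E' →L[ℝ] F) (L₂ : F →L[ℝ] E'' →L[ℝ] F') (L₃ : E →L[ℝ] F'' →L[ℝ] F')
    (L₄ : E' →L[ℝ] E'' →L[ℝ] F'') (hL : ∀ x y z, L₂ (L x y) z = L₃ x (L₄ y z))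
    (hu : IntegrableBddRays u) (hv : IntegrableBddRays v) (hw : IntegrableBddRays w)
    {x : ℝ} (hx : 0 < x) :
    ((u ⋆[L] v) ⋆[L₂] w) x = (u ⋆[L₃] (v ⋆[L₄] w)) x :=
  MeasureTheory.convolution_assoc L L₂ L₃ L₄ hL hu.integrable.aestronglyMeasurable
    hv.integrable.aestronglyMeasurable hw.integrable.aestronglyMeasurable
    (hu.integrable.ae_convolution_exists L hv.integrable)
    (hv.norm.integrable.ae_convolution_exists (mul ℝ ℝ) hw.norm.integrable)
    (hu.norm.convolutionExistsAt (mul ℝ ℝ) (hv.norm.convolution (mul ℝ ℝ) hw.norm) hx)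

end IntegrableBddRays

lemma support_convolution_subset_Ioi_zero [NormedSpace ℝ E] [NormedSpace ℝ E'] [NormedSpace ℝ F]
    (L : E →L[ℝ] E' →L[ℝ] F) {u : ℝ → E} {v : ℝ → E'} (hu : support u ⊆ Ioi 0)
    (hv : support v ⊆ Ioi 0) : support (u ⋆[L] v) ⊆ Ioi 0 := by
  intro x hx
  obtain ⟨s, hs, t, ht, rfl⟩ := support_convolution_subset L hx
  exact add_pos (mem_Ioi.1 (hu hs)) (mem_Ioi.1 (hv ht))

end Convolution

/-- The functions that are integrable near `0` and locally bounded on `(0, ∞)`, a class for which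
the Laplace convolution is defined at every point of `(0, ∞)`. It contains `C_{-1}(0,∞)`; as for
`CMinusOne`, the values on `(-∞, 0]` are irrelevant. -/
structure IsLaplaceKernel (f : ℝ → ℝ) : Prop where
  integrableOn : ∀ b, IntegrableOn f (Ioc 0 b)
  bounded : ∀ a > 0, ∀ b, ∃ C, ∀ t ∈ Icc a b, ‖f t‖ ≤ C

namespace IsLaplaceKernel

variable {f : ℝ → ℝ}

lemma intervalIntegrable (hf : IsLaplaceKernel f) {b : ℝ} (hb : 0 ≤ b) :
    IntervalIntegrable f volume 0 b :=
  (intervalIntegrable_iff_integrableOn_Ioc_of_le hb).2 (hf.integrableOn b)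

lemma integrableBddRays_indicator (hf : IsLaplaceKernel f) (b : ℝ) :
    IntegrableBddRays ((Ioc 0 b).indicator f) where
  integrable := (integrable_indicator_iff measurableSet_Ioc).2 (hf.integrableOn b)
  bounded a ha := by
    obtain ⟨C, hC⟩ := hf.bounded a ha b
    refine ⟨max C 0, fun t hat ↦ ?_⟩
    by_cases ht : t ∈ Ioc 0 b
    · rw [indicator_of_mem ht]
      exact (hC t ⟨hat, ht.2⟩).trans (le_max_left C 0)
    · rw [indicator_of_notMem ht, norm_zero]
      exact le_max_right C 0

end IsLaplaceKernel

namespace CMinusOne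

variable {f : ℝ → ℝ}

lemma continuousOn (hf : CMinusOne f) : ContinuousOn f (Ioi 0) := by
  obtain ⟨p, -, f₁, hf₁, hf_eq⟩ := hf
  have hpow : ContinuousOn (fun t : ℝ ↦ t ^ p) (Ioi 0) :=
    continuousOn_id.rpow_const fun t ht ↦ Or.inl (ne_of_gt ht)
  exact (hpow.mul (hf₁.mono Ioi_subset_Ici_self)).congr hf_eq

lemma integrableOn_Ioc (hf : CMinusOne f) (b : ℝ) : IntegrableOn f (Ioc 0 b) := by
  obtain ⟨p, hp, f₁, hf₁, hf_eq⟩ := hf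
  rcases le_total b 0 with hb | hb
  · simp [Ioc_eq_empty_of_le hb]
  have hprod : IntervalIntegrable (fun t ↦ t ^ p * f₁ t) volume 0 b :=
    (intervalIntegral.intervalIntegrable_rpow' hp).mul_continuousOn
      (hf₁.mono (uIcc_of_le hb ▸ Icc_subset_Ici_self))
  exact ((intervalIntegrable_iff_integrableOn_Ioc_of_le hb).1 hprod).congr_fun
    (fun t ht ↦ (hf_eq t ht.1).symm) measurableSet_Ioc

lemma isLaplaceKernel (hf : CMinusOne f) : IsLaplaceKernel f where
  integrableOn := hf.integrableOn_Ioc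
  bounded _ ha _ := isCompact_Icc.exists_bound_of_continuousOn
    (hf.continuousOn.mono fun _ ht ↦ ha.trans_le ht.1)

end CMinusOne

lemma lconv_comm (f g : ℝ → ℝ) : lconv f g = lconv g f := by
  ext t
  simpa [lconv, mul_comm] using
    (intervalIntegral.integral_comp_sub_left (fun τ ↦ f (t - τ) * g τ) t (a := 0) (b := t)).symm

lemma lconv_eq_convolution {f g u v : ℝ → ℝ} {t : ℝ} (ht : 0 ≤ t)
    (hu : support u ⊆ Ioi 0) (hv : support v ⊆ Ioi 0)
    (hfu : EqOn f u (Ioo 0 t)) (hgv : EqOn g v (Ioo 0 t)) :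
    lconv f g t = (u ⋆[mul ℝ ℝ] v) t := by
  have hsupp : ∀ τ ∉ Ioo 0 t, u (t - τ) * v τ = 0 := fun τ hτ ↦ by
    contrapose! hτ
    exact ⟨hv (right_ne_zero_of_mul hτ), sub_pos.1 (hu (left_ne_zero_of_mul hτ))⟩
  calc lconv f g t = ∫ τ in Ioo 0 t, f (t - τ) * g τ := by
        rw [lconv, intervalIntegral.integral_of_le ht, integral_Ioc_eq_integral_Ioo]
    _ = ∫ τ in Ioo 0 t, u (t - τ) * v τ :=
        setIntegral_congr_fun measurableSet_Ioo fun τ hτ ↦ by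
          simp only [hfu ⟨sub_pos.2 hτ.2, sub_lt_self t hτ.1⟩, hgv hτ]
    _ = ∫ τ, u (t - τ) * v τ := setIntegral_eq_integral_of_forall_compl_eq_zero hsupp
    _ = (u ⋆[mul ℝ ℝ] v) t := convolution_mul_swap.symm

theorem lconv_assoc {f g h : ℝ → ℝ} (hf : IsLaplaceKernel f) (hg : IsLaplaceKernel g)
    (hh : IsLaplaceKernel h) {t : ℝ} (ht : 0 < t) :
    lconv (lconv f g) h t = lconv f (lconv g h) t := by
  let trunc (φ : ℝ → ℝ) : ℝ → ℝ := (Ioc 0 t).indicator φ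
  have support_trunc (φ : ℝ → ℝ) : support (trunc φ) ⊆ Ioi 0 :=
    support_indicator_subset.trans Ioc_subset_Ioi_self
  have eqOn_trunc (φ : ℝ → ℝ) : EqOn φ (trunc φ) (Ioc 0 t) := (eqOn_indicator (f := φ)).symm
  have support_conv (φ ψ : ℝ → ℝ) : support (trunc φ ⋆[mul ℝ ℝ] trunc ψ) ⊆ Ioi 0 :=
    support_convolution_subset_Ioi_zero _ (support_trunc φ) (support_trunc ψ)
  have eqOn_conv (φ ψ : ℝ → ℝ) :
      EqOn (lconv φ ψ) (trunc φ ⋆[mul ℝ ℝ] trunc ψ) (Ioo 0 t) := fun s hs ↦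
    have hst : Ioo 0 s ⊆ Ioc 0 t := fun _ hr ↦ ⟨hr.1, (hr.2.trans hs.2).le⟩
    lconv_eq_convolution hs.1.le (support_trunc φ) (support_trunc ψ)
      ((eqOn_trunc φ).mono hst) ((eqOn_trunc ψ).mono hst)
  calc lconv (lconv f g) h t
      = ((trunc f ⋆[mul ℝ ℝ] trunc g) ⋆[mul ℝ ℝ] trunc h) t :=
        lconv_eq_convolution ht.le (support_conv f g) (support_trunc h)
          (eqOn_conv f g) ((eqOn_trunc h).mono Ioo_subset_Ioc_self)
    _ = (trunc f ⋆[mul ℝ ℝ] (trunc g ⋆[mul ℝ ℝ] trunc h)) t :=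
        IntegrableBddRays.convolution_assoc _ _ _ _ (by simp [mul_assoc])
          (hf.integrableBddRays_indicator t) (hg.integrableBddRays_indicator t)
          (hh.integrableBddRays_indicator t) ht
    _ = lconv f (lconv g h) t :=
        (lconv_eq_convolution ht.le (support_trunc f) (support_conv g h)
          ((eqOn_trunc f).mono Ioo_subset_Ioc_self) (eqOn_conv g h)).symm

lemma lconv_eq_integral_of_eqOn_one {e : ℝ → ℝ} (he : EqOn e 1 (Ioi 0)) (f : ℝ → ℝ) {t : ℝ}
    (ht : 0 ≤ t) : lconv e f t = ∫ τ in (0 : ℝ)..t, f τ :=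
  intervalIntegral.integral_congr_Ioo_of_le ht fun τ hτ ↦ by
    simp [he (sub_pos.2 hτ.2 : t - τ ∈ Ioi 0)]

theorem lconv_lconv_eq_integral {κ k f : ℝ → ℝ} (hκ : IsLaplaceKernel κ)
    (hk : IsLaplaceKernel k) (hf : IsLaplaceKernel f) (hκk : ∀ t > 0, lconv κ k t = 1)
    {t : ℝ} (ht : 0 < t) : lconv k (lconv κ f) t = ∫ τ in (0 : ℝ)..t, f τ := by
  rw [← lconv_assoc hk hκ hf ht, lconv_comm k κ]
  exact lconv_eq_integral_of_eqOn_one hκk f ht.le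

theorem first_fundamental_theorem_RL_general {κ k f : ℝ → ℝ} (hκ : IsLaplaceKernel κ)
    (hk : IsLaplaceKernel k) (hf : IsLaplaceKernel f) (hκk : ∀ t > 0, lconv κ k t = 1)
    {t : ℝ} (ht : 0 < t) (hft : ContinuousAt f t) :
    HasDerivAt (fun s ↦ lconv k (lconv κ f) s) (f t) t := by
  have hmeas : StronglyMeasurableAtFilter f (𝓝 t) :=
    ⟨Ioc 0 (t + 1), Ioc_mem_nhds ht (lt_add_one t),
      (hf.integrableOn (t + 1)).aestronglyMeasurable⟩
  refine (intervalIntegral.integral_hasDerivAt_right (hf.intervalIntegrable ht.le) hmeas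
    hft).congr_of_eventuallyEq ?_
  filter_upwards [Ioi_mem_nhds ht] with s hs
  exact lconv_lconv_eq_integral hκ hk hf hκk hs

/-- First fundamental theorem of FC for the GFD of Riemann–Liouville type:
for `(κ, k) ∈ L₁` and `f ∈ C_{-1}(0,∞)`, the function `s ↦ (k * (κ * f))(s)` is
differentiable at each `t > 0` with derivative `f t`, i.e.
`(D_{(k)} I_{(κ)} f)(t) = f(t)` for all `t > 0`. -/
theorem first_fundamental_theorem_RL (κ k f : ℝ → ℝ) (hκk : SoninPair κ k)
    (hf : CMinusOne f) :
    ∀ t > (0:ℝ), HasDerivAt (fun s => lconv k (lconv κ f) s) (f t) t := by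
  intro t ht
  exact first_fundamental_theorem_RL_general hκk.1.isLaplaceKernel hκk.2.1.isLaplaceKernel
    hf.isLaplaceKernel hκk.2.2 ht (hf.continuousOn.continuousAt (Ioi_mem_nhds ht))
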